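/- Let 𝕂 be ℝ or ℂ and let s be a finite-dimensional Lie algebra over 𝕂 which is a semidirect sum s = r + u, where u is an abelian ideal of s, r is a semisimple Lie subalgebra of s with r ∩ u = 0 and r + u = s, and the space of r-invariants in u is zero (i.e., the only x ∈ u satisfying ⁅y, x⁆ = 0 for all y ∈ r is x = 0). Let γ be an element of the dual space s*. Then the coadjoint tangent space s·γ = {γ ∘ ad(x) : x ∈ s} equals r·γ = {γ ∘ ad(x) : x ∈ r} if and only if γ vanishes identically on u. -/

import Mathlib

/-!
Write `λ` for the restriction of `γ` to `u`, `ρ` for its restriction to `r`, and `h` for the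
stabilizer of `λ` in `r`. As `u` is abelian, `u·γ` is the annihilator of `h` in `r*`, and
`u·γ ⊆ r·γ` says that every functional on `r` vanishing on `h` has the form `ρ ∘ ad a` with
`a ∈ h`. Identifying `ρ` with some `e ∈ r` through a nondegenerate invariant form `B`, this becomes
`h^⊥ ⊆ [e, h]`, which forces `e ∈ h`, so that `h^⊥ ⊆ [h, h]`.

The Casimir operator `C` of `B` commutes with `r`. Computed in a basis adapted to `h`, the
inclusion `h^⊥ ⊆ [h, h]` shows that `λ` annihilates the range of `C`. Choosing `B` to agree with
the trace form of `u` away from its radical, the trace of `C` is the rank of that form. Either the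
trace form is zero, and then `u = 0` by Cartan's criterion since `u` has no invariants; or `C` is
not nilpotent, and `u` is the sum of the range of `C` and its Fitting null component, a proper
submodule on which `λ` vanishes by induction on the dimension.
-/

open Module LieAlgebra LieModule

section CoadjointTangent

variable {R L : Type*} [CommRing R] [LieRing L] [LieAlgebra R L]

/-- The coadjoint tangent directions `t·γ = {γ ∘ ad x | x ∈ t}` at `γ`, with no sign: in terms of
the coadjoint action `⁅x, γ⁆ = -γ ∘ ad x` this is the subspace of all `⁅x, γ⁆` with `x ∈ t`. -/
def coadjointTangent (t : Submodule R L) (γ : Dual R L) : Submodule R (Dual R L) :=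
  t.map ((ad R L : L →ₗ[R] End R L).compr₂ γ)

lemma mem_coadjointTangent {t : Submodule R L} {γ f : Dual R L} :
    f ∈ coadjointTangent t γ ↔ ∃ x ∈ t, f = γ ∘ₗ (ad R L x : L →ₗ[R] L) :=
  exists_congr fun _ ↦ and_congr_right fun _ ↦ eq_comm

lemma coadjointTangent_sup (t t' : Submodule R L) (γ : Dual R L) :
    coadjointTangent (t ⊔ t') γ = coadjointTangent t γ ⊔ coadjointTangent t' γ :=
  Submodule.map_sup ..

lemma coadjointTangent_eq_bot_of_vanishes {I : LieIdeal R L} {γ : Dual R L}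
    (hγ : ∀ x ∈ I, γ x = 0) : coadjointTangent I.toSubmodule γ = ⊥ := by
  refine (Submodule.eq_bot_iff _).mpr fun f hf ↦ ?_
  obtain ⟨x, hx, rfl⟩ := mem_coadjointTangent.mp hf
  exact LinearMap.ext fun y ↦ hγ _ (lie_mem_left R L I x y hx)

end CoadjointTangent

section Stabilizer

variable {R L M : Type*} [CommRing R] [LieRing L] [LieAlgebra R L]
  [AddCommGroup M] [Module R M] [LieRingModule L M] [LieModule R L M]

variable (R L) in
/-- The stabilizer of an element `m` of a Lie module, as a Lie subalgebra. -/
def lieStabilizer (m : M) : LieSubalgebra R L where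
  __ := LinearMap.ker ((toEnd R L M : L →ₗ[R] End R M).flip m)
  lie_mem' {x y} hx hy := by
    replace hx : ⁅x, m⁆ = 0 := hx
    replace hy : ⁅y, m⁆ = 0 := hy
    change ⁅⁅x, y⁆, m⁆ = 0
    rw [lie_lie, hx, hy, lie_zero, lie_zero, sub_zero]

lemma mem_lieStabilizer {m : M} {x : L} : x ∈ lieStabilizer R L m ↔ ⁅x, m⁆ = 0 := Iff.rfl

lemma exists_apply_eq_apply_lie_of_mem_dualAnnihilator_lieStabilizer {K L V : Type*} [Field K]
    [LieRing L] [LieAlgebra K L] [AddCommGroup V] [Module K V] [LieRingModule L V]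
    [LieModule K L V] [Module.Finite K V] {l : Dual K V} {φ : Dual K L}
    (hφ : φ ∈ (lieStabilizer K L l).toSubmodule.dualAnnihilator) :
    ∃ v : V, ∀ x : L, φ x = l ⁅x, v⁆ := by
  set orbitMap := (toEnd K L (Dual K V) : L →ₗ[K] End K (Dual K V)).flip l
  change φ ∈ (LinearMap.ker orbitMap).dualAnnihilator at hφ
  rw [← LinearMap.range_dualMap_eq_dualAnnihilator_ker] at hφ
  obtain ⟨F, rfl⟩ := hφ
  obtain ⟨v, rfl⟩ := (evalEquiv K V).surjective F
  exact ⟨-v, fun x ↦ by simp [orbitMap]⟩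

end Stabilizer

section DualBasis

lemma apply_dualBasis_eq_repr {K M ι : Type*} [Field K] [AddCommGroup M] [Module K M] [Finite ι]
    [DecidableEq ι] {B : LinearMap.BilinForm K M} (hB : B.Nondegenerate) (b : Basis ι K M) (i : ι)
    (x : M) : B (B.dualBasis hB b i) x = b.repr x i := by
  have : B (B.dualBasis hB b i) = b.coord i := b.ext fun j ↦ by
    simp [LinearMap.BilinForm.apply_dualBasis_left, Finsupp.single_apply]
  exact LinearMap.congr_fun this x

/- The tensor `∑ i, dᵢ ⊗ bᵢ` of a nondegenerate invariant form is invariant, expressed through its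
image under an arbitrary bilinear map. -/
lemma sum_lie_dualBasis_add_dualBasis_lie {K L V ι : Type*} [Field K] [LieRing L] [LieAlgebra K L]
    [AddCommGroup V] [Module K V] [Fintype ι] [DecidableEq ι] {B : LinearMap.BilinForm K L}
    (hB : B.Nondegenerate) (b : Basis ι K L) (hinv : B.lieInvariant L) (f : L →ₗ[K] L →ₗ[K] V)
    (x : L) :
    ∑ i, (f ⁅x, B.dualBasis hB b i⁆ (b i) + f (B.dualBasis hB b i) ⁅x, b i⁆) = 0 := by
  set d := B.dualBasis hB b
  have expand_left (i : ι) : f ⁅x, d i⁆ (b i) = ∑ j, B ⁅x, d i⁆ (b j) • f (d j) (b i) := by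
    conv_lhs => rw [← d.sum_repr ⁅x, d i⁆]
    simp [d]
  have expand_right (i : ι) : f (d i) ⁅x, b i⁆ = ∑ j, B (d j) ⁅x, b i⁆ • f (d i) (b j) := by
    conv_lhs => rw [← b.sum_repr ⁅x, b i⁆]
    simp only [d, map_sum, map_smul, apply_dualBasis_eq_repr]
  simp only [expand_left, expand_right, hinv x, Finset.sum_add_distrib]
  rw [Finset.sum_comm]
  simp

end DualBasis

section Casimir

variable {K L V ι : Type*} [Field K] [LieRing L] [LieAlgebra K L]
  [AddCommGroup V] [Module K V] [LieRingModule L V] [LieModule K L V]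
  [Fintype ι] [DecidableEq ι]
  {B : LinearMap.BilinForm K L} (hB : B.Nondegenerate) (b : Basis ι K L)

variable (V) in
/-- The Casimir operator on `V` of a nondegenerate bilinear form `B`, written in a basis `b` of `L`
and its `B`-dual basis (as an operator it does not depend on `b`). -/
noncomputable def casimir : End K V :=
  ∑ i, toEnd K L V (B.dualBasis hB b i) * toEnd K L V (b i)

lemma casimir_apply (v : V) :
    casimir V hB b v = ∑ i, ⁅B.dualBasis hB b i, ⁅b i, v⁆⁆ := by
  simp [casimir]

lemma commute_toEnd_casimir (hinv : B.lieInvariant L) (x : L) :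
    Commute (toEnd K L V x) (casimir V hB b) := by
  have h := sum_lie_dualBasis_add_dualBasis_lie hB b hinv
    ((LinearMap.mul K (End K V)).compl₁₂ (toEnd K L V : L →ₗ[K] End K V)
      (toEnd K L V : L →ₗ[K] End K V)) x
  simp only [LinearMap.compl₁₂_apply, LinearMap.mul_apply', LieHom.coe_toLinearMap, LieHom.map_lie,
    Ring.lie_def] at h
  rw [commute_iff_eq, ← sub_eq_zero, ← h, casimir, Finset.mul_sum, Finset.sum_mul,
    ← Finset.sum_sub_distrib]
  exact Finset.sum_congr rfl fun i _ ↦ by noncomm_ring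

lemma trace_casimir {q : End K L} (hq : ∀ x y, traceForm K L V x y = B (q x) y) :
    LinearMap.trace K V (casimir V hB b) = LinearMap.trace K L q := by
  rw [LinearMap.trace_eq_matrix_trace K (B.dualBasis hB b) q, Matrix.trace, casimir, map_sum]
  refine Finset.sum_congr rfl fun i _ ↦ ?_
  rw [Matrix.diag_apply, LinearMap.toMatrix_apply, LinearMap.BilinForm.dualBasis_repr_apply, ← hq]
  rfl

lemma traceForm_eq_zero_of_isNilpotent_casimir [CharZero K] {q : End K L}
    (hq : IsIdempotentElem q) (htr : ∀ x y, traceForm K L V x y = B (q x) y)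
    (hC : IsNilpotent (casimir V hB b)) : traceForm K L V = 0 := by
  have : Module.Finite K L := b.finiteDimensional_of_finite
  have htrace : LinearMap.trace K L q = 0 := by
    rw [← trace_casimir hB b htr]
    exact (LinearMap.isNilpotent_trace_of_isNilpotent hC).eq_zero
  have hq0 : q = 0 := LinearMap.IsIdempotentElem.eq_zero_of_trace_eq_zero hq htrace
  exact LinearMap.ext₂ fun x y ↦ by simp [htr, hq0]

end Casimir

section AdaptedBasis

variable {K M ι κ : Type*} [Field K] [AddCommGroup M] [Module K M] {W : Submodule K M}

lemma exists_basis_sum_extending [Module.Finite K M] (W : Submodule K M) :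
    ∃ (m n : ℕ) (c : Basis (Fin m) K W) (b : Basis (Fin m ⊕ Fin n) K M),
      ∀ i, b (Sum.inl i) = c i := by
  obtain ⟨W', hW'⟩ := W.exists_isCompl
  exact ⟨_, _, finBasis K W,
    ((finBasis K W).prod (finBasis K W')).map (W.prodEquivOfIsCompl W' hW'), fun i ↦ by simp⟩

variable {c : Basis ι K W} {b : Basis (ι ⊕ κ) K M}

lemma repr_inl_of_extends (hcb : ∀ i, b (Sum.inl i) = c i) (y : W) (i : ι) :
    b.repr y (Sum.inl i) = c.repr y i := by
  have : b.coord (Sum.inl i) ∘ₗ W.subtype = c.coord i :=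
    c.ext fun j ↦ by
      classical simp [← hcb, Finsupp.single_apply]
  exact LinearMap.congr_fun this y

lemma repr_inr_of_extends (hcb : ∀ i, b (Sum.inl i) = c i) (y : W) (j : κ) :
    b.repr y (Sum.inr j) = 0 := by
  have : b.coord (Sum.inr j) ∘ₗ W.subtype = 0 := c.ext fun i ↦ by simp [← hcb]
  exact LinearMap.congr_fun this y

end AdaptedBasis

section OrthogonalSubalgebra

variable {K L V : Type*} [Field K] [LieRing L] [LieAlgebra K L]
  [AddCommGroup V] [Module K V] [LieRingModule L V] [LieModule K L V]
  {B : LinearMap.BilinForm K L} {h : LieSubalgebra K L}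

lemma exists_orthogonal_le_map_ad [Module.Finite K L] (hB : B.Nondegenerate) (hsymm : B.IsSymm)
    (hinv : B.lieInvariant L) {ρ : Dual K L}
    (hρ : h.toSubmodule.dualAnnihilator ≤ coadjointTangent h.toSubmodule ρ) :
    ∃ e ∈ h, B.orthogonal h.toSubmodule ≤ h.toSubmodule.map (ad K L e : L →ₗ[K] L) := by
  obtain ⟨e, rfl⟩ := (B.toDual hB).surjective ρ
  have hperp : B.orthogonal h.toSubmodule ≤ h.toSubmodule.map (ad K L e : L →ₗ[K] L) := by
    intro x hx
    have hBx : B x ∈ h.toSubmodule.dualAnnihilator :=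
      (Submodule.mem_dualAnnihilator _).mpr fun a ha ↦ by rw [hsymm.eq]; exact hx a ha
    obtain ⟨a, ha, hax⟩ := mem_coadjointTangent.mp (hρ hBx)
    refine ⟨a, ha, (B.toDual hB).injective (LinearMap.ext fun y ↦ ?_)⟩
    calc B ⁅e, a⁆ y = B e ⁅a, y⁆ := by rw [← lie_skew, map_neg, LinearMap.neg_apply, hinv, neg_neg]
      _ = B x y := (LinearMap.congr_fun hax y).symm
  refine ⟨e, ?_, hperp⟩
  rw [← LieSubalgebra.mem_toSubmodule,
    ← LinearMap.BilinForm.orthogonal_orthogonal hB hsymm.isRefl h.toSubmodule]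
  intro x hx
  obtain ⟨a, -, rfl⟩ := hperp hx
  change B ⁅e, a⁆ e = 0
  rw [hinv, lie_self, map_zero, neg_zero]

variable {ι κ : Type*} [Fintype ι] [DecidableEq ι] [DecidableEq κ]
  {c : Basis ι K h} {b : Basis (ι ⊕ κ) K L}

lemma sum_lie_dualBasis_inl_mem [Finite κ] (hB : B.Nondegenerate) (hsymm : B.IsSymm)
    (hinv : B.lieInvariant L) (hcb : ∀ i, b (Sum.inl i) = c i)
    (hperp : ∀ x ∈ B.orthogonal h.toSubmodule,
      ∃ y : h, (y : L) = x ∧ LinearMap.trace K h (ad K h y) = 0) :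
    ∑ i, ⁅B.dualBasis hB b (Sum.inl i), b (Sum.inl i)⁆ ∈ h := by
  set d := B.dualBasis hB b
  have : Module.Finite K L := b.finiteDimensional_of_finite
  rw [← LieSubalgebra.mem_toSubmodule,
    ← LinearMap.BilinForm.orthogonal_orthogonal hB hsymm.isRefl h.toSubmodule]
  intro x hx
  obtain ⟨y, rfl, hy⟩ := hperp x hx
  have hterm (i : ι) : B y ⁅d (Sum.inl i), b (Sum.inl i)⁆ = -c.repr ⁅y, c i⁆ i := by
    calc B y ⁅d (Sum.inl i), b (Sum.inl i)⁆
        = B ⁅b (Sum.inl i), (y : L)⁆ (d (Sum.inl i)) := by rw [hinv, ← map_neg, lie_skew]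
      _ = -B (d (Sum.inl i)) ⁅(y : L), b (Sum.inl i)⁆ := by rw [hsymm.eq, ← map_neg, lie_skew]
      _ = -c.repr ⁅y, c i⁆ i := by
        rw [apply_dualBasis_eq_repr, hcb, ← repr_inl_of_extends hcb]
        rfl
  rw [map_sum, Finset.sum_congr rfl fun i _ ↦ hterm i,
    Finset.sum_neg_distrib, neg_eq_zero, ← hy, LinearMap.trace_eq_matrix_trace K c]
  exact Finset.sum_congr rfl fun i _ ↦ (LinearMap.toMatrix_apply c c (ad K h y) i i).symm

lemma apply_casimir_eq_zero [Fintype κ] (hB : B.Nondegenerate) (hsymm : B.IsSymm)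
    (hinv : B.lieInvariant L) (hcb : ∀ i, b (Sum.inl i) = c i)
    (hperp : ∀ x ∈ B.orthogonal h.toSubmodule,
      ∃ y : h, (y : L) = x ∧ LinearMap.trace K h (ad K h y) = 0)
    {l : Dual K V} (hl : ∀ a ∈ h, ∀ v, l ⁅a, v⁆ = 0) (v : V) :
    l (casimir V hB b v) = 0 := by
  set d := B.dualBasis hB b
  have hd (j : κ) : d (Sum.inr j) ∈ h := by
    obtain ⟨y, hy, -⟩ := hperp (d (Sum.inr j)) fun a ha ↦ by
      rw [hsymm.eq, apply_dualBasis_eq_repr]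
      exact repr_inr_of_extends hcb ⟨a, ha⟩ j
    exact hy ▸ y.2
  have hswap (i : ι) : l ⁅d (Sum.inl i), ⁅b (Sum.inl i), v⁆⁆ =
      l ⁅⁅d (Sum.inl i), b (Sum.inl i)⁆, v⁆ := by
    have hb : b (Sum.inl i) ∈ h := hcb i ▸ (c i).2
    rw [leibniz_lie, map_add, hl _ hb, add_zero]
  calc l (casimir V hB b v)
      = ∑ i, l ⁅d (Sum.inl i), ⁅b (Sum.inl i), v⁆⁆ +
          ∑ j, l ⁅d (Sum.inr j), ⁅b (Sum.inr j), v⁆⁆ := by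
        rw [casimir_apply, map_sum, Fintype.sum_sum_type]
    _ = l ⁅∑ i, ⁅d (Sum.inl i), b (Sum.inl i)⁆, v⁆ := by
        simp only [hswap, hl _ (hd _), Finset.sum_const_zero, add_zero, sum_lie, map_sum]
    _ = 0 := hl _ (sum_lie_dualBasis_inl_mem hB hsymm hinv hcb hperp) v

end OrthogonalSubalgebra

section KillingProjection

variable {K L : Type*} [Field K] [LieRing L] [LieAlgebra K L] [Module.Finite K L] [IsKilling K L]

/-- The projection of a Lie algebra with nondegenerate Killing form onto an ideal, along the
complementary ideal `I.killingCompl`. -/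
noncomputable def killingProj (I : LieIdeal K L) : End K L :=
  Submodule.projection I.toSubmodule I.killingCompl.toSubmodule
    (LieSubmodule.isCompl_toSubmodule.mpr I.isCompl_killingCompl)

variable {I : LieIdeal K L}

lemma killingProj_mem (x : L) : killingProj I x ∈ I := Submodule.projection_apply_mem _ x

lemma sub_killingProj_mem (x : L) : x - killingProj I x ∈ I.killingCompl :=
  Submodule.sub_projection_mem _ x

lemma killingProj_of_mem {x : L} (hx : x ∈ I) : killingProj I x = x :=
  Submodule.projection_apply_of_mem_left _ hx

lemma killingProj_lie (x y : L) : killingProj I ⁅x, y⁆ = ⁅x, killingProj I y⁆ := by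
  have hcompl : killingProj I ⁅x, y - killingProj I y⁆ = 0 :=
    (Submodule.projection_apply_eq_zero_iff _).mpr
      (LieSubmodule.lie_mem _ (sub_killingProj_mem y))
  rwa [lie_sub, map_sub, killingProj_of_mem (I.lie_mem (killingProj_mem y)), sub_eq_zero] at hcompl

lemma killingForm_killingProj_left (x y : L) :
    killingForm K L (killingProj I x) y = killingForm K L (killingProj I x) (killingProj I y) := by
  rw [← sub_eq_zero, ← map_sub]
  exact (LieIdeal.mem_killingCompl K L I).mp (sub_killingProj_mem y) _ (killingProj_mem x)

lemma exists_nondegenerate_form_comp_idempotent {T : LinearMap.BilinForm K L} (hT : T.IsSymm)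
    (hTinv : T.lieInvariant L) :
    ∃ (B : LinearMap.BilinForm K L) (q : End K L), B.Nondegenerate ∧ B.IsSymm ∧
      B.lieInvariant L ∧ IsIdempotentElem q ∧ ∀ x y, T x y = B (q x) y := by
  let I : LieIdeal K L := InvariantForm.orthogonal T hTinv ⊤
  have hTI {x : L} (hx : x ∈ I) (y : L) : T x y = 0 := by
    rw [hT.eq]
    exact (InvariantForm.mem_orthogonal T hTinv ⊤ x).mp hx y (LieSubmodule.mem_top y)
  set p := killingProj I
  let B : LinearMap.BilinForm K L := T + killingForm K L ∘ₗ p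
  have hB (x y : L) : B x y = T x y + killingForm K L (p x) y := rfl
  have hsymm : B.IsSymm := ⟨fun x y ↦ by
    rw [hB, hB, hT.eq x y, killingForm_killingProj_left x,
      killingForm_killingProj_left y, traceForm_comm]⟩
  have hker {x : L} (hx : ∀ y, B x y = 0) : x = 0 := by
    have hpx : p x = 0 := by
      have hcompl : p x ∈ I.killingCompl := (LieIdeal.mem_killingCompl K L I).mpr fun y hy ↦ by
        rw [traceForm_comm, ← hx y, hB, hT.eq, hTI hy, zero_add]
      rw [← LieSubmodule.mem_bot (R := K) (L := L), ← I.isCompl_killingCompl.inf_eq_bot]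
      exact ⟨killingProj_mem x, hcompl⟩
    have hxI : x ∈ I := (InvariantForm.mem_orthogonal T hTinv ⊤ x).mpr fun y _ ↦ by
      simpa [hB, hpx, hT.eq y x] using hx y
    rw [← killingProj_of_mem hxI]
    exact hpx
  refine ⟨B, 1 - p, ⟨fun x ↦ hker, fun x hx ↦ hker fun y ↦ ?_⟩, hsymm, fun x y z ↦ ?_,
    IsIdempotentElem.one_sub (LinearMap.ext fun x ↦ killingProj_of_mem (killingProj_mem x)),
    fun x y ↦ ?_⟩
  · rw [hsymm.eq, hx]
  · rw [hB, hB, killingProj_lie, hTinv, traceForm_lieInvariant, neg_add]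
  · have hpp : p (p x) = p x := killingProj_of_mem (killingProj_mem x)
    simp [hB, hTI (killingProj_mem x), hpp, p]

end KillingProjection

section Semisimple

lemma derivedSeries_one_eq_top (R L : Type*) [CommRing R] [LieRing L] [LieAlgebra R L]
    [IsSemisimple R L] : derivedSeries R L 1 = ⊤ := by
  rw [eq_top_iff, ← IsSemisimple.sSup_atoms_eq_top (R := R) (L := L)]
  refine sSup_le fun I hI ↦ ?_
  rw [← lie_eq_self_of_isAtom_of_nonabelian I hI
    (IsSemisimple.non_abelian_of_isAtom I hI)]
  exact LieSubmodule.mono_lie le_top le_top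

variable {K L V : Type*} [Field K] [CharZero K] [LieRing L] [LieAlgebra K L]
  [AddCommGroup V] [Module K V] [LieRingModule L V] [LieModule K L V] [Module.Finite K V]

lemma subsingleton_of_traceForm_eq_zero [IsSemisimple K L]
    (hV : maxTrivSubmodule K L V = ⊥) (hT : traceForm K L V = 0) : Subsingleton V := by
  have hnil := isNilpotent_derivedSeries_of_traceForm_eq_zero hT
  by_contra hne
  rw [not_subsingleton_iff_nontrivial] at hne
  have := nontrivial_max_triv_of_isNilpotent K (derivedSeries K L 1) V
  obtain ⟨⟨v, hv⟩, hv0⟩ := exists_ne (0 : maxTrivSubmodule K (derivedSeries K L 1) V)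
  have hinv : v ∈ maxTrivSubmodule K L V := fun x ↦
    hv ⟨x, derivedSeries_one_eq_top K L ▸ LieSubmodule.mem_top x⟩
  rw [hV, LieSubmodule.mem_bot] at hinv
  exact hv0 (Subtype.ext hinv)

end Semisimple

lemma exists_lieSubmodule_ne_top_sup_range_eq_top {R L M : Type*} [CommRing R] [LieRing L]
    [AddCommGroup M] [Module R M] [LieRingModule L M] [IsArtinian R M]
    {f : End R M} (hf : ∀ (x : L) (m : M), f ⁅x, m⁆ = ⁅x, f m⁆) (hnil : ¬ IsNilpotent f) :
    ∃ N : LieSubmodule R L M, N ≠ ⊤ ∧ N.toSubmodule ⊔ LinearMap.range f = ⊤ := by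
  obtain ⟨n, hn⟩ := Filter.eventually_atTop.mp f.eventually_codisjoint_ker_pow_range_pow
  have hpow (k : ℕ) (x : L) (m : M) : (f ^ k) ⁅x, m⁆ = ⁅x, (f ^ k) m⁆ := by
    induction k with
    | zero => rfl
    | succ k ih => simp [pow_succ', ih, hf]
  let N : LieSubmodule R L M :=
    { LinearMap.ker (f ^ (n + 1)) with
      lie_mem := fun {x m} hm ↦ by
        replace hm : (f ^ (n + 1)) m = 0 := hm
        exact LinearMap.mem_ker.mpr (by rw [hpow, hm, lie_zero]) }
  refine ⟨N, fun hN ↦ hnil ⟨n + 1, LinearMap.ker_eq_top.mp ?_⟩, ?_⟩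
  · exact congrArg LieSubmodule.toSubmodule hN
  · refine eq_top_mono (sup_le_sup_left ?_ _) (hn (n + 1) n.le_succ).eq_top
    rw [pow_succ']
    exact LinearMap.range_comp_le_range _ _

theorem dual_eq_zero_of_dualAnnihilator_le_coadjointTangent {K L V : Type*} [Field K] [CharZero K]
    [LieRing L] [LieAlgebra K L] [Module.Finite K L] [IsKilling K L]
    [AddCommGroup V] [Module K V] [LieRingModule L V] [LieModule K L V] [Module.Finite K V]
    {h : LieSubalgebra K L} {ρ : Dual K L}
    (hρ : h.toSubmodule.dualAnnihilator ≤ coadjointTangent h.toSubmodule ρ)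
    (hV : maxTrivSubmodule K L V = ⊥) {l : Dual K V} (hl : ∀ a ∈ h, ∀ v, l ⁅a, v⁆ = 0) :
    l = 0 := by
  induction hn : finrank K V using Nat.strong_induction_on generalizing V with
  | _ n ih =>
  obtain hT | hT := eq_or_ne (traceForm K L V) 0
  · have := subsingleton_of_traceForm_eq_zero hV hT
    exact Subsingleton.elim _ _
  obtain ⟨B, q, hB, hsymm, hinv, hq, htr⟩ := exists_nondegenerate_form_comp_idempotent
    ⟨traceForm_comm K L V⟩ (traceForm_lieInvariant K L V)
  obtain ⟨e, he, hperp⟩ := exists_orthogonal_le_map_ad hB hsymm hinv hρ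
  obtain ⟨_, _, c, b, hcb⟩ := exists_basis_sum_extending h.toSubmodule
  have hlC (v : V) : l (casimir V hB b v) = 0 := by
    refine apply_casimir_eq_zero hB hsymm hinv hcb (fun x hx ↦ ?_) hl v
    obtain ⟨a, ha, rfl⟩ := hperp hx
    exact ⟨⁅(⟨e, he⟩ : h), (⟨a, ha⟩ : h)⁆, rfl, by simp⟩
  obtain ⟨N, hN, hsup⟩ := exists_lieSubmodule_ne_top_sup_range_eq_top
    (fun x v ↦ (LinearMap.congr_fun (commute_toEnd_casimir (V := V) hB b hinv x) v).symm)
    (mt (traceForm_eq_zero_of_isNilpotent_casimir hB b hq htr) hT)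
  have hlt : finrank K N < n :=
    hn ▸ Submodule.finrank_lt fun htop ↦ hN (LieSubmodule.toSubmodule_injective htop)
  have hNinv : maxTrivSubmodule K L N = ⊥ := (LieSubmodule.eq_bot_iff _).mpr fun v hv ↦ by
    have : (v : V) ∈ maxTrivSubmodule K L V := fun x ↦ congrArg Subtype.val (hv x)
    rw [hV, LieSubmodule.mem_bot] at this
    exact Subtype.ext this
  have hlN : l ∘ₗ N.toSubmodule.subtype = 0 := ih _ hlt hNinv (fun a ha v ↦ hl a ha v) rfl
  rw [← LinearMap.ker_eq_top, eq_top_iff, ← hsup]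
  refine sup_le (fun v hv ↦ LinearMap.congr_fun hlN ⟨v, hv⟩) ?_
  rintro _ ⟨v, rfl⟩
  exact hlC v

theorem vanishes_of_coadjointTangent_le {K s : Type*} [Field K] [CharZero K]
    [LieRing s] [LieAlgebra K s] [Module.Finite K s]
    {r : LieSubalgebra K s} [IsSemisimple K r] {u : LieIdeal K s} [IsLieAbelian u]
    (hinv : ∀ x ∈ u, (∀ y ∈ r, ⁅y, x⁆ = 0) → x = 0) {γ : Dual K s}
    (hγ : coadjointTangent u.toSubmodule γ ≤ coadjointTangent r.toSubmodule γ) :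
    ∀ x ∈ u, γ x = 0 := by
  let l : Dual K u := γ ∘ₗ u.toSubmodule.subtype
  have mem_stab {y : r} : y ∈ lieStabilizer K r l ↔ ∀ v : u, γ ⁅(y : s), (v : s)⁆ = 0 := by
    rw [mem_lieStabilizer, LinearMap.ext_iff]
    exact forall_congr' fun v ↦ neg_eq_zero
  have hρ : (lieStabilizer K r l).toSubmodule.dualAnnihilator ≤
      coadjointTangent (lieStabilizer K r l).toSubmodule (γ ∘ₗ r.toSubmodule.subtype) := by
    intro φ hφ
    obtain ⟨v, hv⟩ := exists_apply_eq_apply_lie_of_mem_dualAnnihilator_lieStabilizer hφ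
    obtain ⟨a, ha, hav⟩ := mem_coadjointTangent.mp
      (hγ (mem_coadjointTangent.mpr ⟨-v, neg_mem v.2, rfl⟩))
    replace hav (y : s) : γ ⁅y, (v : s)⁆ = γ ⁅a, y⁆ := by
      rw [← lie_skew, ← neg_lie]
      exact LinearMap.congr_fun hav y
    refine mem_coadjointTangent.mpr ⟨⟨a, ha⟩, mem_stab.mpr fun w ↦ ?_, LinearMap.ext fun y ↦ ?_⟩
    · have hwv : ⁅(w : s), (v : s)⁆ = 0 := congrArg Subtype.val (trivial_lie_zero u u w v)
      rw [← hav, hwv, map_zero]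
    · exact (hv y).trans (hav y)
  have hu : maxTrivSubmodule K r u = ⊥ := (LieSubmodule.eq_bot_iff _).mpr fun v hv ↦
    Subtype.ext (hinv v v.2 fun y hy ↦ congrArg Subtype.val (hv ⟨y, hy⟩))
  have hl : l = 0 := dual_eq_zero_of_dualAnnihilator_le_coadjointTangent hρ hu
    fun a ha v ↦ mem_stab.mp ha v
  exact fun x hx ↦ LinearMap.congr_fun hl ⟨x, hx⟩

theorem coadjoint_tangent_eq_iff_vanishes_on_abelian_ideal_general {K s : Type*} [Field K]
    [CharZero K] [LieRing s] [LieAlgebra K s] [Module.Finite K s]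
    {r : LieSubalgebra K s} [IsSemisimple K r] {u : LieIdeal K s} [IsLieAbelian u]
    (hsup : r.toSubmodule ⊔ u.toSubmodule = ⊤)
    (hinv : ∀ x ∈ u, (∀ y ∈ r, ⁅y, x⁆ = 0) → x = 0) (γ : Dual K s) :
    coadjointTangent ⊤ γ = coadjointTangent r.toSubmodule γ ↔ ∀ x ∈ u, γ x = 0 := by
  rw [← hsup, coadjointTangent_sup, sup_eq_left]
  exact ⟨vanishes_of_coadjointTangent_le hinv,
    fun hγ ↦ (coadjointTangent_eq_bot_of_vanishes hγ).trans_le bot_le⟩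

/-- **Theorem 7 (Brylinski–Kostant).** Let `𝕂` be `ℝ` or `ℂ` and let `s` be a
finite-dimensional Lie algebra over `𝕂` which is a semidirect sum `s = r + u`,
where `u` is an abelian ideal, `r` is a semisimple Lie subalgebra with
`r ⊓ u = 0` and `r + u = s`, and the `r`-invariants in `u` vanish.  For
`γ ∈ s*`, the coadjoint tangent space `s·γ = {γ ∘ ad x : x ∈ s}` equals
`r·γ = {γ ∘ ad x : x ∈ r}` if and only if `γ` vanishes identically on `u`. -/
theorem coadjoint_tangent_eq_iff_vanishes_on_abelian_ideal
    (𝕂 : Type*) [RCLike 𝕂]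
    (s : Type*) [LieRing s] [LieAlgebra 𝕂 s] [Module.Finite 𝕂 s]
    (r : LieSubalgebra 𝕂 s) (u : LieIdeal 𝕂 s)
    (hr : LieAlgebra.IsSemisimple 𝕂 r)
    (hu : IsLieAbelian u)
    (hinf : r.toSubmodule ⊓ LieSubmodule.toSubmodule u = ⊥)
    (hsup : r.toSubmodule ⊔ LieSubmodule.toSubmodule u = ⊤)
    (hinv : ∀ x ∈ u, (∀ y ∈ r, ⁅y, x⁆ = 0) → x = 0)
    (γ : Module.Dual 𝕂 s) :
    {f : Module.Dual 𝕂 s | ∃ x : s, f = γ ∘ₗ (LieAlgebra.ad 𝕂 s x : s →ₗ[𝕂] s)}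
      = {f : Module.Dual 𝕂 s | ∃ x ∈ r, f = γ ∘ₗ (LieAlgebra.ad 𝕂 s x : s →ₗ[𝕂] s)}
    ↔ ∀ x ∈ u, γ x = 0 := by
  rw [← coadjoint_tangent_eq_iff_vanishes_on_abelian_ideal_general hsup hinv γ]
  simp [SetLike.ext_iff, Set.ext_iff, mem_coadjointTangent]
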